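/- For any positive integer n, ∑_{k=1}^n C(n,k) · ((-2)^k/k) · H_k = −2 · ∑_{1 ≤ k ≤ n, k odd} (H_n − H_{n-k})/k. -/

import Mathlib

/-- `H n` is the harmonic number `∑_{k=1}^n 1/k`. -/
def H (n : ℕ) : ℚ := ∑ k ∈ Finset.Icc 1 n, (1 : ℚ) / k

lemma H_zero : H 0 = 0 := by simp [H]

lemma H_succ (n : ℕ) : H (n + 1) = H n + 1 / ((n : ℚ) + 1) := by
  unfold H
  rw [Finset.sum_Icc_succ_top (by omega)]
  push_cast; rfl

lemma sum_Icc_shift (f : ℕ → ℚ) (n : ℕ) :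
    ∑ k ∈ Finset.Icc 1 n, f k = ∑ k ∈ Finset.range n, f (k + 1) := by
  induction n with
  | zero => simp
  | succ n ih => rw [Finset.sum_Icc_succ_top (by omega), Finset.sum_range_succ, ih]

lemma absorb (n k : ℕ) : (n.choose k : ℚ) / ((k : ℚ) + 1)
    = ((n + 1).choose (k + 1) : ℚ) / ((n : ℚ) + 1) := by
  have h : ((n : ℚ) + 1) * n.choose k = (n + 1).choose (k + 1) * ((k : ℚ) + 1) := by
    exact_mod_cast Nat.add_one_mul_choose_eq n k
  have h1 : (k : ℚ) + 1 ≠ 0 := by positivity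
  have h2 : (n : ℚ) + 1 ≠ 0 := by positivity
  rw [div_eq_div_iff h1 h2]
  linarith

def LL (n : ℕ) : ℚ :=
  ∑ k ∈ Finset.range n, (n.choose (k + 1) : ℚ) * (-2) ^ (k + 1) / ((k : ℚ) + 1) * H (k + 1)

def BB (n : ℕ) : ℚ :=
  ∑ k ∈ Finset.range n, (n.choose (k + 1) : ℚ) * (-2) ^ (k + 1) * H (k + 1)

def SS (n : ℕ) : ℚ := ∑ k ∈ Finset.range n, (-1 : ℚ) ^ k / ((n : ℚ) - k)

def RR (n : ℕ) : ℚ :=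
  ∑ k ∈ Finset.range n, ((-1 : ℚ) ^ (k + 1) - 1) * (H n - H (n - (k + 1))) / ((k : ℚ) + 1)

lemma binom_sum (n : ℕ) : ∑ k ∈ Finset.range (n + 1), (n.choose k : ℚ) * (-2) ^ (k + 1) / ((k : ℚ) + 1)
    = ((-1) ^ (n + 1) - 1) / ((n : ℚ) + 1) := by
  have h := add_pow (-2 : ℚ) 1 (n + 1)
  rw [Finset.sum_range_succ'] at h
  norm_num at h
  rw [h, add_sub_cancel_right, Finset.sum_div]
  refine Finset.sum_congr rfl fun k _ => ?_
  have := absorb n k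
  calc _ = (n.choose k : ℚ) / ((k : ℚ) + 1) * (-2) ^ (k + 1) := by ring
    _ = _ := by rw [this]; ring

lemma LL_succ (n : ℕ) : LL (n + 1) = LL n + BB (n + 1) / ((n : ℚ) + 1) := by
  have e : LL n = ∑ k ∈ Finset.range (n + 1),
      (n.choose (k + 1) : ℚ) * (-2) ^ (k + 1) / ((k : ℚ) + 1) * H (k + 1) := by
    rw [Finset.sum_range_succ]; simp [LL]
  rw [e, LL, BB, Finset.sum_div, ← Finset.sum_add_distrib]
  refine Finset.sum_congr rfl fun k _ => ?_
  have := absorb n k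
  calc _ = (n.choose (k + 1) : ℚ) * (-2) ^ (k + 1) / ((k : ℚ) + 1) * H (k + 1)
        + (n.choose k : ℚ) / ((k : ℚ) + 1) * ((-2) ^ (k + 1) * H (k + 1)) := by
        rw [Nat.choose_succ_succ]; push_cast; ring
    _ = _ := by rw [this]; ring

lemma BB_succ (n : ℕ) : BB (n + 1) = - BB n + ((-1) ^ (n + 1) - 1) / ((n : ℚ) + 1) := by
  have e : BB n = ∑ k ∈ Finset.range (n + 1),
      (n.choose (k + 1) : ℚ) * (-2) ^ (k + 1) * H (k + 1) := by
    rw [Finset.sum_range_succ]; simp [BB]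
  have e2 : BB n = ∑ k ∈ Finset.range (n + 1), (n.choose k : ℚ) * (-2) ^ k * H k := by
    rw [Finset.sum_range_succ']; simp [BB, H_zero]
  have e3 : BB (n + 1) = BB n + (-2) * BB n + ((-1) ^ (n + 1) - 1) / ((n : ℚ) + 1) := by
    rw [← binom_sum]
    nth_rewrite 2 [e2]
    rw [e, BB, Finset.mul_sum, ← Finset.sum_add_distrib, ← Finset.sum_add_distrib]
    refine Finset.sum_congr rfl fun k _ => ?_
    rw [Nat.choose_succ_succ, H_succ]; push_cast; ring
  rw [e3]; ring

lemma SS_succ (n : ℕ) : SS (n + 1) = 1 / ((n : ℚ) + 1) - SS n := by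
  rw [SS, Finset.sum_range_succ', SS, sub_eq_add_neg (1 / ((n : ℚ) + 1)), add_comm, ← Finset.sum_neg_distrib]
  congr 1
  · simp
  · refine Finset.sum_congr rfl fun k _ => ?_
    push_cast
    rw [add_sub_add_right_eq_sub, pow_succ]; ring

lemma BB_eq (n : ℕ) : BB n = (-1) ^ n * H n - SS n := by
  induction n with
  | zero => simp [BB, SS, H_zero]
  | succ n ih => rw [BB_succ, SS_succ, ih, H_succ]; ring

lemma H_refl (n : ℕ) : H n = ∑ k ∈ Finset.range n, 1 / ((n : ℚ) - k) := by
  induction n with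
  | zero => simp [H_zero]
  | succ n ih =>
    rw [H_succ, ih, Finset.sum_range_succ']
    push_cast
    simp

lemma RR_succ (n : ℕ) : RR (n + 1) = RR n + BB (n + 1) / ((n : ℚ) + 1) := by
  have hn : (n : ℚ) + 1 ≠ 0 := by positivity
  have e : SS (n + 1) - H (n + 1)
      = ∑ k ∈ Finset.range n, ((-1 : ℚ) ^ (k + 1) - 1) / ((n : ℚ) - k) := by
    rw [H_refl, SS, ← Finset.sum_sub_distrib, Finset.sum_range_succ']
    push_cast
    simp [sub_div]
  have e2 : BB (n + 1) = ((-1) ^ (n + 1) - 1) * H (n + 1) - (SS (n + 1) - H (n + 1)) := by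
    rw [BB_eq]; ring
  rw [e2, e, RR, Finset.sum_range_succ, RR, sub_div, Finset.sum_div]
  have e3 : ∑ k ∈ Finset.range n,
      ((-1 : ℚ) ^ (k + 1) - 1) * (H (n + 1) - H (n + 1 - (k + 1))) / ((k : ℚ) + 1)
      = ∑ k ∈ Finset.range n,
          ((-1 : ℚ) ^ (k + 1) - 1) * (H n - H (n - (k + 1))) / ((k : ℚ) + 1)
        - ∑ k ∈ Finset.range n, ((-1 : ℚ) ^ (k + 1) - 1) / ((n : ℚ) - k) / ((n : ℚ) + 1) := by
    rw [← Finset.sum_sub_distrib]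
    refine Finset.sum_congr rfl fun k hk => ?_
    obtain ⟨m, rfl⟩ : ∃ m, n = m + k + 1 := ⟨n - k - 1, by grind⟩
    have h1 : m + k + 1 + 1 - (k + 1) = m + 1 := by omega
    have h2 : m + k + 1 - (k + 1) = m := by omega
    have h3 : ((m + k + 1 : ℕ) : ℚ) - k = m + 1 := by push_cast; ring
    rw [h1, h2, h3, H_succ (m + k + 1), H_succ m]
    have a1 : (k : ℚ) + 1 ≠ 0 := by positivity
    have a2 : (m : ℚ) + 1 ≠ 0 := by positivity
    push_cast at hn ⊢
    field_simp
    ring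
  rw [e3]
  simp [H_zero]
  ring

lemma LL_eq_RR (n : ℕ) : LL n = RR n := by
  induction n with
  | zero => simp [LL, RR]
  | succ n ih => rw [LL_succ, RR_succ, ih]

theorem stmt13 (n : ℕ) (hn : 0 < n) :
    ∑ k ∈ Finset.Icc 1 n, (n.choose k : ℚ) * (-2) ^ k / k * H k
      = -2 * ∑ k ∈ (Finset.Icc 1 n).filter (fun k => Odd k), (H n - H (n - k)) / k := by
  rw [Finset.sum_filter, sum_Icc_shift, sum_Icc_shift]
  have h := LL_eq_RR n
  unfold LL RR at h
  push_cast
  rw [h, Finset.mul_sum]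
  refine Finset.sum_congr rfl fun k _ => ?_
  split_ifs with ho
  · rw [ho.neg_one_pow]; ring
  · rw [(Nat.not_odd_iff_even.mp ho).neg_one_pow]; ring
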